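/- arXiv:2107.02616 — 2 statements merged into one kernel-verified Lean document; each statement's English description precedes it below -/
import Mathlib

section
/- For every C¹-IFS (T_1,…,T_n) on [0,1] there exists a sequence of non-negative real numbers (b_m)_{m∈ℕ} with b_m = o(m) such that for all finite words ω ∈ I^* and all x, y ∈ [0,1], e^{−b_{|ω|}} ≤ T_ω'(x)/T_ω'(y) ≤ e^{b_{|ω|}} (weak bounded distortion property). -/
open MeasureTheory Set Filter Topology
open scoped ENNReal NNReal Classical

noncomputable section

namespace Symb

/-- Finite words over the alphabet `{1,…,N}`. -/
abbrev Word (N : ℕ) := List (Fin N)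

/-- The sequence space `I^ℕ`. -/
abbrev SeqSp (N : ℕ) := ℕ → Fin N

variable {N : ℕ}

/-- The shift map on `I^ℕ`. -/
def shift (x : SeqSp N) : SeqSp N := fun k => x (k + 1)

/-- The cylinder set `[w]` of a finite word `w`. -/
def cylinder (w : Word N) : Set (SeqSp N) := {x | ∀ i : Fin w.length, x i = w.get i}

/-- Concatenation `w x` of a finite word with an infinite sequence. -/
def cat (w : Word N) (x : SeqSp N) : SeqSp N := fun k =>
  if h : k < w.length then w.get ⟨k, h⟩ else x (k - w.length)

/-- Birkhoff sum `S_m f(x) = Σ_{k<m} f(σ^k x)`. -/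
def birkhoff (f : SeqSp N → ℝ) (m : ℕ) (x : SeqSp N) : ℝ :=
  ∑ k ∈ Finset.range m, f (shift^[k] x)

/-- `S_w f = sup_{x ∈ [w]} S_{|w|} f(x)`. -/
def supBirkhoff (f : SeqSp N → ℝ) (w : Word N) : ℝ :=
  sSup (birkhoff f w.length '' cylinder w)

/-- `s_w f = inf_{x ∈ [w]} S_{|w|} f(x)`. -/
def infBirkhoff (f : SeqSp N → ℝ) (w : Word N) : ℝ :=
  sInf (birkhoff f w.length '' cylinder w)

/-- `Σ_{w ∈ Iᵐ} exp (S_w f)`. -/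
def partSum (f : SeqSp N → ℝ) (m : ℕ) : ℝ :=
  ∑ v : Fin m → Fin N, Real.exp (supBirkhoff f (List.ofFn v))

/-- The topological pressure `P(f) = lim_m (1/m) log Σ_{w ∈ Iᵐ} exp(S_w f)`
(defined via `limsup`; for continuous `f` the limit exists). -/
def pressure (f : SeqSp N → ℝ) : ℝ :=
  Filter.limsup (fun m => Real.log (partSum f m) / m) Filter.atTop

/-- `var_k(f)`, the `k`-th variation of `f`. -/
def varn (f : SeqSp N → ℝ) (k : ℕ) : ℝ :=
  sSup {d | ∃ x y : SeqSp N, (∀ i < k, x i = y i) ∧ d = |f x - f y|}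

/-- The Perron–Frobenius (transfer) operator `L_ψ f(x) = Σ_{σ y = x} e^{ψ(y)} f(y)`. -/
def transfer (ψ f : SeqSp N → ℝ) (x : SeqSp N) : ℝ :=
  ∑ j : Fin N, Real.exp (ψ (cat [j] x)) * f (cat [j] x)

/-- `L_ψ 1 = 1`. -/
def Normalized (ψ : SeqSp N → ℝ) : Prop :=
  ∀ x, ∑ j : Fin N, Real.exp (ψ (cat [j] x)) = 1

/-- `ν` is a fixed point of the dual transfer operator: `∫ L_ψ f dν = ∫ f dν`
for all continuous `f`. -/
def IsTransferFixed (ψ : SeqSp N → ℝ) (ν : MeasureTheory.Measure (SeqSp N)) : Prop :=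
  ∀ f : SeqSp N → ℝ, Continuous f → ∫ x, transfer ψ f x ∂ν = ∫ x, f x ∂ν

/-- `ψ` is Hölder continuous on `I^ℕ`: `var_k(ψ) ≤ C αᵏ` for some `α ∈ (0,1)`. -/
def HolderPotential (ψ : SeqSp N → ℝ) : Prop :=
  ∃ α ∈ Set.Ioo (0:ℝ) 1, ∃ C : ℝ, ∀ k : ℕ, varn ψ k ≤ C * α ^ k

end Symb

namespace Symb

/-- A `C¹` iterated function system on `[0,1]`. -/
structure C1IFS (N : ℕ) where
  T : Fin N → ℝ → ℝ
  T' : Fin N → ℝ → ℝ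
  maps_into : ∀ i, Set.MapsTo (T i) (Set.Icc 0 1) (Set.Icc 0 1)
  hderiv : ∀ i, ∀ x ∈ Set.Icc (0:ℝ) 1, HasDerivWithinAt (T i) (T' i x) (Set.Icc 0 1) x
  cont_deriv : ∀ i, ContinuousOn (T' i) (Set.Icc 0 1)
  contracting : ∀ i, ∃ r < (1:ℝ), ∀ x ∈ Set.Icc (0:ℝ) 1, |T' i x| ≤ r
  deriv_bdd_below : ∀ i, ∃ c > (0:ℝ), ∀ x ∈ Set.Icc (0:ℝ) 1, c ≤ |T' i x|

variable {N : ℕ}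

/-- The IFS is non-trivial: at least two maps and no common fixed point. -/
def C1IFS.NontrivialIFS (Φ : C1IFS N) : Prop :=
  2 ≤ N ∧ ¬ ∃ x ∈ Set.Icc (0:ℝ) 1, ∀ i, Φ.T i x = x

/-- The IFS is `C^{1+γ}`: every `T_i'` is `γ`-Hölder for some `γ ∈ (0,1)`. -/
def C1IFS.IsC1gamma (Φ : C1IFS N) : Prop :=
  ∃ γ ∈ Set.Ioo (0:ℝ) 1, ∃ C : ℝ, ∀ i, ∀ x ∈ Set.Icc (0:ℝ) 1, ∀ y ∈ Set.Icc (0:ℝ) 1,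
    |Φ.T' i x - Φ.T' i y| ≤ C * |x - y| ^ γ

/-- `T_w = T_{w₁} ∘ ⋯ ∘ T_{w_k}`. -/
def wordMap (Φ : C1IFS N) : Word N → ℝ → ℝ
  | [] => id
  | i :: w => Φ.T i ∘ wordMap Φ w

/-- `T_w'`, the derivative of `T_w` (by the chain rule). -/
def wordDeriv (Φ : C1IFS N) : Word N → ℝ → ℝ
  | [] => fun _ => 1
  | i :: w => fun x => Φ.T' i (wordMap Φ w x) * wordDeriv Φ w x

/-- `π` is the natural coding map of the IFS:  `π(x) ∈ T_{x|m}([0,1])` for all `m`. -/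
def IsCoding (Φ : C1IFS N) (π : SeqSp N → ℝ) : Prop :=
  ∀ x : SeqSp N, ∀ m : ℕ, π x ∈ wordMap Φ (List.ofFn fun i : Fin m => x i) '' Set.Icc 0 1

/-- The geometric potential `φ(ω) = log |T'_{ω₁}(π(σω))|`. -/
def geomPot (Φ : C1IFS N) (π : SeqSp N → ℝ) (x : SeqSp N) : ℝ :=
  Real.log |Φ.T' (x 0) (π (shift x))|

/-- The open set condition with feasible open set `(0,1)`. -/
def OSC (Φ : C1IFS N) : Prop :=
  ∀ i j, i ≠ j → Disjoint (Φ.T i '' Set.Ioo 0 1) (Φ.T j '' Set.Ioo 0 1)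

/-- Left endpoint of the interval `I_w = T_w([0,1])`. -/
def aW (Φ : C1IFS N) (w : Word N) : ℝ := sInf (wordMap Φ w '' Set.Icc 0 1)

/-- Right endpoint of the interval `I_w = T_w([0,1])`. -/
def bW (Φ : C1IFS N) (w : Word N) : ℝ := sSup (wordMap Φ w '' Set.Icc 0 1)

/-- `(b_m)` is a weak bounded distortion sequence for `Φ`: non-negative, `o(m)`, and
`e^{-b_{|w|}} ≤ T_w'(x)/T_w'(y) ≤ e^{b_{|w|}}` for all words `w` and `x,y ∈ [0,1]`. -/
def IsWBDPseq (Φ : C1IFS N) (b : ℕ → ℝ) : Prop :=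
  (∀ m, 0 ≤ b m) ∧ Filter.Tendsto (fun m => b m / m) Filter.atTop (nhds 0) ∧
  ∀ w : Word N, ∀ x ∈ Set.Icc (0:ℝ) 1, ∀ y ∈ Set.Icc (0:ℝ) 1,
    Real.exp (-(b w.length)) ≤ wordDeriv Φ w x / wordDeriv Φ w y ∧
    wordDeriv Φ w x / wordDeriv Φ w y ≤ Real.exp (b w.length)

end Symb
open Symb

/-!
By the chain rule, `log |T_w'(x)| - log |T_w'(y)|` is a sum over the letters of `w` of increments
of the functions `log |T_i'|`. A letter followed by `k` others compares two points in the image of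
a word of length `k`, which are at distance at most `r ^ k` for a common contraction ratio `r < 1`.
So the increment is at most `ω (r ^ k)`, where `ω` is a common modulus of continuity of the
`log |T_i'|`, and `b m = ∑ k < m, ω (r ^ k)` is `o(m)` because its terms tend to zero. The ratio
`T_w'(x) / T_w'(y)` is positive because `T_w'` is continuous without zeros.
-/

namespace Symb

section ModulusOfContinuity

variable {ι α β : Type*} [PseudoMetricSpace α] [PseudoMetricSpace β]

/-- The optimal common modulus of continuity on `s` of a family of functions `F`. It is meaningful
when the family is uniformly bounded on `s`; the supremum of an unbounded set of reals is `0`. -/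
def modulusOfContinuity (F : ι → α → β) (s : Set α) (δ : ℝ) : ℝ :=
  sSup {d | ∃ i, ∃ x ∈ s, ∃ y ∈ s, dist x y ≤ δ ∧ dist (F i x) (F i y) = d}

variable {F : ι → α → β} {s : Set α}

lemma modulusOfContinuity_nonneg (F : ι → α → β) (s : Set α) (δ : ℝ) :
    0 ≤ modulusOfContinuity F s δ := by
  apply Real.sSup_nonneg
  rintro _ ⟨i, x, -, y, -, -, rfl⟩
  exact dist_nonneg

lemma dist_le_modulusOfContinuity (hF : Bornology.IsBounded (⋃ i, F i '' s)) (i : ι) {x y : α}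
    (hx : x ∈ s) (hy : y ∈ s) {δ : ℝ} (hxy : dist x y ≤ δ) :
    dist (F i x) (F i y) ≤ modulusOfContinuity F s δ := by
  obtain ⟨C, hC⟩ := Metric.isBounded_iff.1 hF
  have mem_iUnion_image {j : ι} {z : α} (hz : z ∈ s) : F j z ∈ ⋃ i, F i '' s :=
    mem_iUnion_of_mem j (mem_image_of_mem _ hz)
  refine le_csSup ⟨C, ?_⟩ ⟨i, x, hx, y, hy, hxy, rfl⟩
  rintro _ ⟨j, u, hu, v, hv, -, rfl⟩
  exact hC (mem_iUnion_image hu) (mem_iUnion_image hv)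

lemma tendsto_modulusOfContinuity (hF : UniformEquicontinuousOn F s) :
    Tendsto (modulusOfContinuity F s) (𝓝 0) (𝓝 0) := by
  rw [Metric.nhds_basis_closedBall.tendsto_right_iff]
  intro ε hε
  obtain ⟨η, hη, hFη⟩ := (Metric.uniformity_basis_dist.inf_principal _).eventually_iff.1
    (hF _ (Metric.uniformity_basis_dist_le.mem_of_mem hε))
  filter_upwards [Iio_mem_nhds hη] with δ hδ
  rw [mem_closedBall_zero_iff, Real.norm_of_nonneg (modulusOfContinuity_nonneg F s δ)]
  refine Real.sSup_le ?_ hε.le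
  rintro _ ⟨i, x, hx, y, hy, hxy, rfl⟩
  exact hFη (x := (x, y)) ⟨hxy.trans_lt hδ, hx, hy⟩ i

end ModulusOfContinuity

lemma div_pos_of_isPreconnected_of_ne_zero {X : Type*} [TopologicalSpace X] {s : Set X} {f : X → ℝ}
    (hs : IsPreconnected s) (hf : ContinuousOn f s) (hne : ∀ z ∈ s, f z ≠ 0) {x y : X}
    (hx : x ∈ s) (hy : y ∈ s) : 0 < f x / f y := by
  by_contra! hxy
  have hyy : 0 ≤ f y / f y := by simp [hne y hy]
  obtain ⟨z, hz, hzero⟩ := hs.intermediate_value hx hy (hf.div_const (f y)) ⟨hxy, hyy⟩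
  exact div_ne_zero (hne z hz) (hne y hy) hzero

lemma exp_neg_le_div_and_div_le_exp {a b d : ℝ} (hab : 0 < a / b)
    (h : |Real.log a - Real.log b| ≤ d) : Real.exp (-d) ≤ a / b ∧ a / b ≤ Real.exp d := by
  obtain ⟨ha, hb⟩ := div_ne_zero_iff.1 hab.ne'
  rwa [← Real.log_div ha hb, abs_le, Real.le_log_iff_exp_le hab, Real.log_le_iff_le_exp hab] at h

variable {N : ℕ} (Φ : C1IFS N)

lemma C1IFS.exists_lipschitzOnWith_lt_one :
    ∃ r : ℝ≥0, r < 1 ∧ ∀ i, LipschitzOnWith r (Φ.T i) (Icc 0 1) := by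
  have each_contracts (i : Fin N) :
      ∃ r : ℝ≥0, r < 1 ∧ LipschitzOnWith r (Φ.T i) (Icc 0 1) := by
    obtain ⟨r, hr, hT'⟩ := Φ.contracting i
    refine ⟨r.toNNReal, Real.toNNReal_lt_one.2 hr,
      (convex_Icc 0 1).lipschitzOnWith_of_nnnorm_hasDerivWithin_le (Φ.hderiv i) fun x hx => ?_⟩
    exact NNReal.le_toNNReal_of_coe_le (hT' x hx)
  choose r hr hT using each_contracts
  exact ⟨Finset.univ.sup r, (Finset.sup_lt_iff one_pos).2 fun i _ => hr i,
    fun i => (hT i).weaken (Finset.le_sup (Finset.mem_univ i))⟩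

lemma C1IFS.T'_ne_zero (i : Fin N) {x : ℝ} (hx : x ∈ Icc (0 : ℝ) 1) : Φ.T' i x ≠ 0 := by
  obtain ⟨c, hc, hT'⟩ := Φ.deriv_bdd_below i
  exact abs_pos.1 (hc.trans_le (hT' x hx))

lemma C1IFS.continuousOn_log_T' (i : Fin N) :
    ContinuousOn (fun x => Real.log (Φ.T' i x)) (Icc 0 1) :=
  (Φ.cont_deriv i).log fun _ => Φ.T'_ne_zero i

lemma mapsTo_wordMap (w : Word N) : MapsTo (wordMap Φ w) (Icc 0 1) (Icc 0 1) := by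
  induction w with
  | nil => exact mapsTo_id _
  | cons i w ih => exact (Φ.maps_into i).comp ih

variable {Φ} in
lemma lipschitzOnWith_wordMap {r : ℝ≥0} (hr : ∀ i, LipschitzOnWith r (Φ.T i) (Icc 0 1))
    (w : Word N) : LipschitzOnWith (r ^ w.length) (wordMap Φ w) (Icc 0 1) := by
  induction w with
  | nil => exact LipschitzWith.id.lipschitzOnWith
  | cons i w ih =>
    rw [List.length_cons, pow_succ']
    exact (hr i).comp ih (mapsTo_wordMap Φ w)

variable {Φ} in
lemma dist_wordMap_le {r : ℝ≥0} (hr : ∀ i, LipschitzOnWith r (Φ.T i) (Icc 0 1)) (w : Word N)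
    {x y : ℝ} (hx : x ∈ Icc (0 : ℝ) 1) (hy : y ∈ Icc (0 : ℝ) 1) :
    dist (wordMap Φ w x) (wordMap Φ w y) ≤ (r : ℝ) ^ w.length :=
  calc
    dist (wordMap Φ w x) (wordMap Φ w y) ≤ (r : ℝ) ^ w.length * dist x y :=
      mod_cast (lipschitzOnWith_wordMap hr w).dist_le_mul x hx y hy
    _ ≤ (r : ℝ) ^ w.length :=
      mul_le_of_le_one_right (by positivity) (Real.dist_le_of_mem_Icc_01 hx hy)

lemma continuousOn_wordMap (w : Word N) : ContinuousOn (wordMap Φ w) (Icc 0 1) := by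
  obtain ⟨r, -, hr⟩ := Φ.exists_lipschitzOnWith_lt_one
  exact (lipschitzOnWith_wordMap hr w).continuousOn

lemma continuousOn_wordDeriv (w : Word N) : ContinuousOn (wordDeriv Φ w) (Icc 0 1) := by
  induction w with
  | nil => exact continuousOn_const
  | cons i w ih =>
    exact ((Φ.cont_deriv i).comp (continuousOn_wordMap Φ w) (mapsTo_wordMap Φ w)).mul ih

lemma wordDeriv_ne_zero (w : Word N) {x : ℝ} (hx : x ∈ Icc (0 : ℝ) 1) :
    wordDeriv Φ w x ≠ 0 := by
  induction w with
  | nil => exact one_ne_zero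
  | cons i w ih => exact mul_ne_zero (Φ.T'_ne_zero i (mapsTo_wordMap Φ w hx)) ih

lemma wordDeriv_div_wordDeriv_pos (w : Word N) {x y : ℝ} (hx : x ∈ Icc (0 : ℝ) 1)
    (hy : y ∈ Icc (0 : ℝ) 1) : 0 < wordDeriv Φ w x / wordDeriv Φ w y :=
  div_pos_of_isPreconnected_of_ne_zero isPreconnected_Icc (continuousOn_wordDeriv Φ w)
    (fun _ => wordDeriv_ne_zero Φ w) hx hy

lemma log_wordDeriv_cons (i : Fin N) (w : Word N) {x : ℝ} (hx : x ∈ Icc (0 : ℝ) 1) :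
    Real.log (wordDeriv Φ (i :: w) x) =
      Real.log (Φ.T' i (wordMap Φ w x)) + Real.log (wordDeriv Φ w x) :=
  Real.log_mul (Φ.T'_ne_zero i (mapsTo_wordMap Φ w hx)) (wordDeriv_ne_zero Φ w hx)

/-- The common modulus of continuity on `[0,1]` of the functions `log |T_i'|`; the absolute value
is part of `Real.log`, which is even. -/
def logDerivModulus (δ : ℝ) : ℝ :=
  modulusOfContinuity (fun i x => Real.log (Φ.T' i x)) (Icc 0 1) δ

lemma dist_log_T'_le_logDerivModulus (i : Fin N) {x y : ℝ} (hx : x ∈ Icc (0 : ℝ) 1)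
    (hy : y ∈ Icc (0 : ℝ) 1) {δ : ℝ} (hxy : dist x y ≤ δ) :
    dist (Real.log (Φ.T' i x)) (Real.log (Φ.T' i y)) ≤ logDerivModulus Φ δ :=
  dist_le_modulusOfContinuity (F := fun i x => Real.log (Φ.T' i x))
    (Bornology.isBounded_iUnion.2 fun j =>
      (isCompact_Icc.image_of_continuousOn (Φ.continuousOn_log_T' j)).isBounded) i hx hy hxy

lemma tendsto_logDerivModulus : Tendsto (logDerivModulus Φ) (𝓝 0) (𝓝 0) :=
  tendsto_modulusOfContinuity <| uniformEquicontinuousOn_finite.2 fun i =>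
    isCompact_Icc.uniformContinuousOn_of_continuous (Φ.continuousOn_log_T' i)

/-- The bound `∑ k < m, ω (r ^ k)` on the logarithmic distortion of the words of length `m`, where
`ω` is `logDerivModulus Φ` and `r` stands for a common contraction ratio of the maps of `Φ`. -/
def distortionBound (r : ℝ) (m : ℕ) : ℝ :=
  ∑ k ∈ Finset.range m, logDerivModulus Φ (r ^ k)

lemma distortionBound_nonneg (r : ℝ) (m : ℕ) : 0 ≤ distortionBound Φ r m :=
  Finset.sum_nonneg fun _ _ => modulusOfContinuity_nonneg _ _ _

lemma tendsto_distortionBound_div {r : ℝ} (hr : |r| < 1) :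
    Tendsto (fun m : ℕ => distortionBound Φ r m / m) atTop (𝓝 0) := by
  have hterm : Tendsto (fun k : ℕ => logDerivModulus Φ (r ^ k)) atTop (𝓝 0) :=
    (tendsto_logDerivModulus Φ).comp (tendsto_pow_atTop_nhds_zero_of_abs_lt_one hr)
  simpa only [distortionBound, div_eq_inv_mul] using hterm.cesaro

variable {Φ} in
lemma abs_log_wordDeriv_sub_le {r : ℝ≥0} (hr : ∀ i, LipschitzOnWith r (Φ.T i) (Icc 0 1))
    (w : Word N) {x y : ℝ} (hx : x ∈ Icc (0 : ℝ) 1) (hy : y ∈ Icc (0 : ℝ) 1) :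
    |Real.log (wordDeriv Φ w x) - Real.log (wordDeriv Φ w y)| ≤ distortionBound Φ r w.length := by
  simp only [← Real.dist_eq]
  induction w with
  | nil => simp [wordDeriv, distortionBound]
  | cons i w ih =>
    have first_letter : dist (Real.log (Φ.T' i (wordMap Φ w x)))
        (Real.log (Φ.T' i (wordMap Φ w y))) ≤ logDerivModulus Φ (r ^ w.length) :=
      dist_log_T'_le_logDerivModulus Φ i (mapsTo_wordMap Φ w hx) (mapsTo_wordMap Φ w hy)
        (dist_wordMap_le hr w hx hy)
    rw [log_wordDeriv_cons Φ i w hx, log_wordDeriv_cons Φ i w hy, distortionBound,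
      List.length_cons, Finset.sum_range_succ, add_comm (∑ _ ∈ _, _)]
    exact (dist_add_add_le _ _ _ _).trans (add_le_add first_letter ih)

end Symb

/-- **Lemma 4.4 (weak bounded distortion property).**  For every non-trivial `C¹`-IFS
there is a sequence `(b_m)` of non-negative numbers with `b_m = o(m)` such that for all
finite words `w` and all `x, y ∈ [0,1]`,
`e^{-b_{|w|}} ≤ T_w'(x)/T_w'(y) ≤ e^{b_{|w|}}`. -/
theorem weak_bounded_distortion
    {N : ℕ} (Φ : C1IFS N) (hΦ : Φ.NontrivialIFS) :
    ∃ b : ℕ → ℝ, (∀ m, 0 ≤ b m) ∧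
      Filter.Tendsto (fun m => b m / m) Filter.atTop (nhds 0) ∧
      ∀ w : Word N, ∀ x ∈ Set.Icc (0:ℝ) 1, ∀ y ∈ Set.Icc (0:ℝ) 1,
        Real.exp (-(b w.length)) ≤ wordDeriv Φ w x / wordDeriv Φ w y ∧
        wordDeriv Φ w x / wordDeriv Φ w y ≤ Real.exp (b w.length) := by
  obtain ⟨r, hr_lt, hr⟩ := Φ.exists_lipschitzOnWith_lt_one
  have hr_abs : |(r : ℝ)| < 1 := by rwa [NNReal.abs_eq, NNReal.coe_lt_one]
  refine ⟨distortionBound Φ r, distortionBound_nonneg Φ r, tendsto_distortionBound_div Φ hr_abs, ?_⟩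
  intro w x hx y hy
  exact exp_neg_le_div_and_div_le_exp (wordDeriv_div_wordDeriv_pos Φ w hx hy)
    (abs_log_wordDeriv_sub_le hr w hx hy)
end
end

section
/- For m ∈ ℕ large enough, let u̲_m, ū_m > 0 be the unique solutions of Σ_{ω∈I^m} exp(u̲_m(S_ω φ + b_{|ω|} + S_ω ψ)) = 1 and Σ_{ω∈I^m} exp(ū_m(s_ω φ − b_{|ω|} + s_ω ψ)) = 1. Then lim_{m→∞} ū_m = lim_{m→∞} u̲_m = z_ρ, the unique zero of the pressure function t ↦ P(tξ) with ξ = ψ + φ. -/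
open MeasureTheory Set Filter Topology
open scoped ENNReal NNReal Classical

noncomputable section

open Symb

/-!
Put `ξ = ψ + φ`. By continuity, Birkhoff sums of length `m` vary by only `o(m)` on a cylinder of
length `m`, so up to `o(m)` the exponents in both families of equations are Birkhoff sums of `ξ`,
and the exponents in the partition sum of `z ξ` are `z` times those. By compactness `ξ ≤ -c` for
some `c > 0`; hence `t ↦ log ∑ exp (t a_ω)` decreases with slope at most `-c m / 2` for large `m`.
It takes the value `0` at the solution and `o(m)` at `z`, so the two points differ by `o(1)`.
-/

theorem exists_pos_forall_le_neg {X : Type*} [TopologicalSpace X] [CompactSpace X]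
    {f : X → ℝ} (hf : Continuous f) (hneg : ∀ x, f x < 0) : ∃ c > 0, ∀ x, f x ≤ -c := by
  obtain ⟨c, hc, hle⟩ := isCompact_univ.exists_forall_le' hf.neg.continuousOn
    fun x _ => neg_pos.2 (hneg x)
  exact ⟨c, hc, fun x => le_neg.1 (hle x (mem_univ x))⟩

section LogSumExp

variable {ι : Type*} [Fintype ι]

theorem nonempty_of_sum_exp_eq_one {f : ι → ℝ} (h : ∑ i, Real.exp (f i) = 1) : Nonempty ι := by
  by_contra hι
  rw [not_nonempty_iff] at hι
  simp at h

variable [Nonempty ι]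

theorem log_sum_exp_add_le {f g : ι → ℝ} {c : ℝ} (h : ∀ i, f i + c ≤ g i) :
    Real.log (∑ i, Real.exp (f i)) + c ≤ Real.log (∑ i, Real.exp (g i)) := by
  have hpos : 0 < ∑ i, Real.exp (f i) :=
    Finset.sum_pos (fun _ _ => Real.exp_pos _) Finset.univ_nonempty
  calc Real.log (∑ i, Real.exp (f i)) + c
      = Real.log (∑ i, Real.exp (f i + c)) := by
        simp_rw [Real.exp_add]
        rw [← Finset.sum_mul, Real.log_mul hpos.ne' (Real.exp_ne_zero c), Real.log_exp]
    _ ≤ Real.log (∑ i, Real.exp (g i)) := by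
        gcongr with i
        exact h i

theorem abs_log_sum_exp_sub_le {f g : ι → ℝ} {ε : ℝ} (h : ∀ i, |f i - g i| ≤ ε) :
    |Real.log (∑ i, Real.exp (f i)) - Real.log (∑ i, Real.exp (g i))| ≤ ε := by
  have hle := log_sum_exp_add_le (f := f) (g := g) (c := -ε) fun i => by
    linarith [(abs_le.1 (h i)).2]
  have hge := log_sum_exp_add_le (f := g) (g := f) (c := -ε) fun i => by
    linarith [(abs_le.1 (h i)).1]
  exact abs_le.2 ⟨by linarith, by linarith⟩

theorem mul_abs_sub_le_abs_log_sum_exp_mul_sub {a : ι → ℝ} {κ : ℝ} (ha : ∀ i, a i ≤ -κ)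
    (s t : ℝ) :
    κ * |s - t| ≤
      |Real.log (∑ i, Real.exp (s * a i)) - Real.log (∑ i, Real.exp (t * a i))| := by
  wlog hst : s ≤ t generalizing s t
  · rw [abs_sub_comm s, abs_sub_comm (Real.log _)]
    exact this t s (le_of_not_ge hst)
  have hgap := log_sum_exp_add_le (f := fun i => t * a i) (g := fun i => s * a i)
    (c := κ * (t - s)) fun i => by
      linarith [mul_le_mul_of_nonneg_left (ha i) (sub_nonneg.2 hst)]
  rw [abs_sub_comm s, abs_of_nonneg (sub_nonneg.2 hst)]
  exact (le_sub_iff_add_le'.2 hgap).trans (le_abs_self _)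

end LogSumExp

section ExpSumEquation

variable {ι : ℕ → Type*} [∀ m, Fintype (ι m)] {a : ∀ m, ι m → ℝ} {u : ℕ → ℝ} {c z : ℝ}

theorem tendsto_of_sum_exp_mul_eq_one (hc : 0 < c)
    (ha : ∀ᶠ m : ℕ in atTop, ∀ i, a m i ≤ -(c * m))
    (hz : Tendsto (fun m : ℕ => Real.log (∑ i, Real.exp (z * a m i)) / m) atTop (𝓝 0))
    (hu : ∀ᶠ m in atTop, ∑ i, Real.exp (u m * a m i) = 1) :
    Tendsto u atTop (𝓝 z) := by
  have hlim : Tendsto (fun m : ℕ => |Real.log (∑ i, Real.exp (z * a m i)) / m| / c)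
      atTop (𝓝 0) := by
    simpa using hz.abs.div_const c
  rw [tendsto_iff_dist_tendsto_zero]
  refine squeeze_zero' (.of_forall fun _ => dist_nonneg) ?_ hlim
  filter_upwards [ha, hu, eventually_gt_atTop 0] with m ham hum hm
  have := nonempty_of_sum_exp_eq_one hum
  have hm_pos : (0 : ℝ) < m := Nat.cast_pos.2 hm
  have hgap := mul_abs_sub_le_abs_log_sum_exp_mul_sub ham (u m) z
  rw [hum, Real.log_one, zero_sub, abs_neg] at hgap
  rw [Real.dist_eq, abs_div, abs_of_pos hm_pos, div_div, le_div_iff₀ (by positivity)]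
  linarith

end ExpSumEquation

namespace Symb

variable {N : ℕ} {f : SeqSp N → ℝ}

section Variation

theorem abs_sub_le_varn (hf : Continuous f) {k : ℕ} {x y : SeqSp N} (hxy : ∀ i < k, x i = y i) :
    |f x - f y| ≤ varn f k := by
  obtain ⟨M, hM⟩ := (isCompact_range hf.abs).bddAbove
  refine le_csSup ⟨M + M, ?_⟩ ⟨x, y, hxy, rfl⟩
  rintro _ ⟨x, y, -, rfl⟩
  exact (abs_sub _ _).trans (add_le_add (hM ⟨x, rfl⟩) (hM ⟨y, rfl⟩))

theorem varn_nonneg (f : SeqSp N → ℝ) (k : ℕ) : 0 ≤ varn f k := by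
  refine Real.sSup_nonneg ?_
  rintro _ ⟨x, y, -, rfl⟩
  exact abs_nonneg _

theorem exists_abs_sub_lt_of_agree (hf : Continuous f) {ε : ℝ} (hε : 0 < ε) :
    ∃ k : ℕ, ∀ x y : SeqSp N, (∀ i < k, x i = y i) → |f x - f y| < ε := by
  let _ : MetricSpace (SeqSp N) := PiNat.metricSpace
  obtain ⟨δ, hδ, hfδ⟩ :=
    Metric.uniformContinuous_iff.1 (CompactSpace.uniformContinuous_of_continuous hf) ε hε
  obtain ⟨k, hk⟩ := exists_pow_lt_of_lt_one hδ one_half_lt_one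
  exact ⟨k, fun x y hxy => hfδ ((PiNat.mem_cylinder_iff_dist_le.1 hxy).trans_lt hk)⟩

theorem tendsto_varn (hf : Continuous f) : Tendsto (varn f) atTop (𝓝 0) := by
  refine tendsto_order.2 ⟨fun r hr => .of_forall fun k => hr.trans_le (varn_nonneg f k), ?_⟩
  intro ε hε
  obtain ⟨k, hk⟩ := exists_abs_sub_lt_of_agree hf (half_pos hε)
  filter_upwards [eventually_ge_atTop k] with n hn
  refine (Real.sSup_le ?_ (half_pos hε).le).trans_lt (half_lt_self hε)
  rintro _ ⟨x, y, hxy, rfl⟩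
  exact (hk x y fun i hi => hxy i (hi.trans_le hn)).le

end Variation

section BirkhoffVariation

/-- The sum `∑_{k=1}^m var_k(f)`, which bounds the oscillation of the Birkhoff sum `S_m f` on
cylinders of length `m`. -/
def birkhoffVar (f : SeqSp N → ℝ) (m : ℕ) : ℝ :=
  ∑ j ∈ Finset.range m, varn f (j + 1)

theorem tendsto_birkhoffVar_div (hf : Continuous f) :
    Tendsto (fun m : ℕ => birkhoffVar f m / m) atTop (𝓝 0) := by
  simpa only [birkhoffVar, div_eq_inv_mul, Function.comp_apply]
    using ((tendsto_varn hf).comp (tendsto_add_atTop_nat 1)).cesaro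

theorem iterate_shift_apply (k : ℕ) (x : SeqSp N) (i : ℕ) : shift^[k] x i = x (i + k) := by
  induction k generalizing x with
  | zero => rfl
  | succ k ih => rw [Function.iterate_succ_apply, ih, shift, add_assoc]

theorem abs_birkhoff_sub_le (hf : Continuous f) {m : ℕ} {x y : SeqSp N}
    (hxy : ∀ i < m, x i = y i) : |birkhoff f m x - birkhoff f m y| ≤ birkhoffVar f m := by
  rw [birkhoffVar, ← Finset.sum_range_reflect, birkhoff, birkhoff, ← Finset.sum_sub_distrib]
  refine (Finset.abs_sum_le_sum_abs _ _).trans (Finset.sum_le_sum fun k hk => ?_)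
  refine abs_sub_le_varn hf fun i hi => ?_
  rw [iterate_shift_apply, iterate_shift_apply]
  exact hxy _ (by have := Finset.mem_range.1 hk; omega)

variable {w : Word N} {x : SeqSp N}

theorem cylinder_nonempty (hw : w ≠ []) : (cylinder w).Nonempty :=
  ⟨cat w fun _ => w.head hw, fun i => by simp [cat]⟩

theorem birkhoff_image_cylinder_subset (hf : Continuous f) (hx : x ∈ cylinder w) :
    birkhoff f w.length '' cylinder w ⊆
      Metric.closedBall (birkhoff f w.length x) (birkhoffVar f w.length) := by
  rintro _ ⟨y, hy, rfl⟩
  exact abs_birkhoff_sub_le hf fun i hi => (hy ⟨i, hi⟩).trans (hx ⟨i, hi⟩).symm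

theorem abs_supBirkhoff_sub_le (hf : Continuous f) (hx : x ∈ cylinder w) :
    |supBirkhoff f w - birkhoff f w.length x| ≤ birkhoffVar f w.length := by
  have hsub := birkhoff_image_cylinder_subset hf hx
  exact closure_minimal hsub Metric.isClosed_closedBall <|
    csSup_mem_closure ⟨_, x, hx, rfl⟩ (Metric.isBounded_closedBall.subset hsub).bddAbove

theorem abs_infBirkhoff_sub_le (hf : Continuous f) (hx : x ∈ cylinder w) :
    |infBirkhoff f w - birkhoff f w.length x| ≤ birkhoffVar f w.length := by
  have hsub := birkhoff_image_cylinder_subset hf hx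
  exact closure_minimal hsub Metric.isClosed_closedBall <|
    csInf_mem_closure ⟨_, x, hx, rfl⟩ (Metric.isBounded_closedBall.subset hsub).bddBelow

end BirkhoffVariation

section BirkhoffSum

theorem birkhoff_add (f g : SeqSp N → ℝ) (m : ℕ) (x : SeqSp N) :
    birkhoff (f + g) m x = birkhoff f m x + birkhoff g m x :=
  Finset.sum_add_distrib

theorem birkhoff_const_mul (r : ℝ) (f : SeqSp N → ℝ) (m : ℕ) (x : SeqSp N) :
    birkhoff (fun y => r * f y) m x = r * birkhoff f m x :=
  (Finset.mul_sum _ _ _).symm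

theorem birkhoff_le_mul {r : ℝ} (hf : ∀ x, f x ≤ r) (m : ℕ) (x : SeqSp N) :
    birkhoff f m x ≤ r * m := by
  simpa [birkhoff, mul_comm] using
    Finset.sum_le_card_nsmul (Finset.range m) _ r fun k _ => hf (shift^[k] x)

end BirkhoffSum

section PressureZero

variable {ξ : SeqSp N → ℝ} {a : Word N → ℝ} {e u : ℕ → ℝ} {z : ℝ}

theorem eventually_le_neg_mul_of_abs_sub_birkhoff_le (he : Tendsto (fun m => e m / m) atTop (𝓝 0))
    (ha : ∀ w, ∀ x ∈ cylinder w, |a w - birkhoff ξ w.length x| ≤ e w.length)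
    {c : ℝ} (hc : 0 < c) (hξ : ∀ x, ξ x ≤ -c) :
    ∀ᶠ m : ℕ in atTop, ∀ v : Fin m → Fin N, a (List.ofFn v) ≤ -(c / 2 * m) := by
  filter_upwards [he.eventually_lt_const (half_pos hc), eventually_gt_atTop 0] with m hem hm v
  obtain ⟨x, hx⟩ := cylinder_nonempty (w := List.ofFn v) (by simpa using hm.ne')
  have hax := (abs_le.1 (ha _ x hx)).2
  rw [List.length_ofFn] at hax
  rw [div_lt_iff₀ (Nat.cast_pos.2 hm)] at hem
  linarith [birkhoff_le_mul hξ m x]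

theorem abs_mul_sub_supBirkhoff_le (hξ : Continuous ξ) {w : Word N} {x : SeqSp N}
    (hx : x ∈ cylinder w) {r ε : ℝ} (hr : |r - birkhoff ξ w.length x| ≤ ε) (t : ℝ) :
    |t * r - supBirkhoff (fun x => t * ξ x) w| ≤
      |t| * ε + birkhoffVar (fun x => t * ξ x) w.length := by
  have hsup := abs_supBirkhoff_sub_le (hξ.const_mul t) hx
  rw [birkhoff_const_mul, abs_sub_comm] at hsup
  refine (abs_sub_le _ (t * birkhoff ξ w.length x) _).trans (add_le_add ?_ hsup)
  rw [← mul_sub, abs_mul]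
  exact mul_le_mul_of_nonneg_left hr (abs_nonneg t)

theorem tendsto_log_sum_exp_mul_div [NeZero N] (hξ : Continuous ξ)
    (he : Tendsto (fun m => e m / m) atTop (𝓝 0))
    (ha : ∀ w, ∀ x ∈ cylinder w, |a w - birkhoff ξ w.length x| ≤ e w.length)
    (hz : Tendsto (fun m => Real.log (partSum (fun x => z * ξ x) m) / m) atTop (𝓝 0)) :
    Tendsto (fun m : ℕ => Real.log (∑ v : Fin m → Fin N, Real.exp (z * a (List.ofFn v))) / m)
      atTop (𝓝 0) := by
  have herr : Tendsto (fun m : ℕ => |z| * (e m / m) + birkhoffVar (fun x => z * ξ x) m / m)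
      atTop (𝓝 0) := by
    simpa using (he.const_mul |z|).add (tendsto_birkhoffVar_div (hξ.const_mul z))
  refine hz.congr_dist (squeeze_zero' (.of_forall fun _ => dist_nonneg) ?_ herr)
  filter_upwards [eventually_gt_atTop 0] with m hm
  have hm_pos : (0 : ℝ) < m := Nat.cast_pos.2 hm
  rw [dist_comm, Real.dist_eq, ← sub_div, abs_div, abs_of_pos hm_pos, ← mul_div_assoc, ← add_div]
  gcongr
  refine abs_log_sum_exp_sub_le fun v => ?_
  obtain ⟨x, hx⟩ := cylinder_nonempty (w := List.ofFn v) (by simpa using hm.ne')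
  simpa using abs_mul_sub_supBirkhoff_le hξ hx (ha _ x hx) z

theorem tendsto_of_abs_sub_birkhoff_le (hξ : Continuous ξ) (hneg : ∀ x, ξ x < 0)
    (he : Tendsto (fun m => e m / m) atTop (𝓝 0))
    (ha : ∀ w, ∀ x ∈ cylinder w, |a w - birkhoff ξ w.length x| ≤ e w.length)
    (hz : Tendsto (fun m => Real.log (partSum (fun x => z * ξ x) m) / m) atTop (𝓝 0))
    (hu : ∀ᶠ m in atTop, ∑ v : Fin m → Fin N, Real.exp (u m * a (List.ofFn v)) = 1) :
    Tendsto u atTop (𝓝 z) := by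
  obtain ⟨m, hum, hm⟩ := (hu.and (eventually_gt_atTop 0)).exists
  obtain ⟨v⟩ := nonempty_of_sum_exp_eq_one hum
  have : NeZero N := ⟨(v ⟨0, hm⟩).pos.ne'⟩
  obtain ⟨c, hc, hle⟩ := exists_pos_forall_le_neg hξ hneg
  exact tendsto_of_sum_exp_mul_eq_one (half_pos hc)
    (eventually_le_neg_mul_of_abs_sub_birkhoff_le he ha hc hle)
    (tendsto_log_sum_exp_mul_div hξ he ha hz) hu

end PressureZero

section Potentials

variable {Φ : C1IFS N} {π : SeqSp N → ℝ}

theorem IsCoding.mem_Icc (hπ : IsCoding Φ π) (x : SeqSp N) : π x ∈ Icc (0 : ℝ) 1 := by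
  simpa [wordMap] using hπ x 0

theorem C1IFS.abs_T'_pos (Φ : C1IFS N) (i : Fin N) {y : ℝ} (hy : y ∈ Icc (0 : ℝ) 1) :
    0 < |Φ.T' i y| := by
  obtain ⟨c, hc, hle⟩ := Φ.deriv_bdd_below i
  exact hc.trans_le (hle y hy)

theorem continuous_geomPot (hπ : IsCoding Φ π) (hπc : Continuous π) :
    Continuous (geomPot Φ π) := by
  have hlog : Continuous fun q : Fin N × Icc (0 : ℝ) 1 => Real.log |Φ.T' q.1 q.2| :=
    continuous_prod_of_discrete_left.2 fun i =>
      ((Φ.cont_deriv i).abs.log fun _ hy => (Φ.abs_T'_pos i hy).ne').domRestrict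
  have hshift : Continuous (shift : SeqSp N → SeqSp N) :=
    continuous_pi fun k => continuous_apply (k + 1)
  exact hlog.comp <| (continuous_apply 0).prodMk <|
    (hπc.comp hshift).subtype_mk fun _ => hπ.mem_Icc _

theorem geomPot_neg (hπ : IsCoding Φ π) (x : SeqSp N) : geomPot Φ π x < 0 := by
  have hmem := hπ.mem_Icc (shift x)
  obtain ⟨r, hr, hle⟩ := Φ.contracting (x 0)
  exact Real.log_neg (Φ.abs_T'_pos (x 0) hmem) ((hle _ hmem).trans_lt hr)

theorem cat_head_shift (x : SeqSp N) : cat [x 0] (shift x) = x := by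
  funext k
  cases k <;> simp [cat, shift]

theorem Normalized.nonpos {ψ : SeqSp N → ℝ} (hψ : Normalized ψ) (x : SeqSp N) : ψ x ≤ 0 := by
  rw [← Real.exp_le_one_iff]
  calc Real.exp (ψ x) = Real.exp (ψ (cat [x 0] (shift x))) := by rw [cat_head_shift]
    _ ≤ ∑ j, Real.exp (ψ (cat [j] (shift x))) :=
      Finset.single_le_sum (f := fun j => Real.exp (ψ (cat [j] (shift x))))
        (fun _ _ => (Real.exp_pos _).le) (Finset.mem_univ (x 0))
    _ = 1 := hψ (shift x)

end Potentials

end Symb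

theorem solutions_tend_to_pressure_zero_general
    {N : ℕ} {φ ψ : SeqSp N → ℝ} (hφ : Continuous φ) (hψ : Continuous ψ)
    (hneg : ∀ x, ψ x + φ x < 0)
    {b : ℕ → ℝ} (hb : Tendsto (fun m => b m / m) atTop (𝓝 0))
    {ulow uup : ℕ → ℝ}
    (hulow : ∀ᶠ m : ℕ in atTop, ∑ v : Fin m → Fin N, Real.exp (ulow m *
      (supBirkhoff φ (List.ofFn v) + b m + supBirkhoff ψ (List.ofFn v))) = 1)
    (huup : ∀ᶠ m : ℕ in atTop, ∑ v : Fin m → Fin N, Real.exp (uup m *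
      (infBirkhoff φ (List.ofFn v) - b m + infBirkhoff ψ (List.ofFn v))) = 1)
    {z : ℝ}
    (hz : Tendsto (fun m => Real.log (partSum (fun x => z * (ψ x + φ x)) m) / m) atTop (𝓝 0)) :
    Tendsto uup atTop (𝓝 z) ∧ Tendsto ulow atTop (𝓝 z) := by
  have herr : Tendsto (fun m : ℕ => (birkhoffVar φ m + |b m| + birkhoffVar ψ m) / m)
      atTop (𝓝 0) := by
    simpa [add_div, abs_div] using
      ((tendsto_birkhoffVar_div hφ).add hb.abs).add (tendsto_birkhoffVar_div hψ)
  constructor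
  · refine tendsto_of_abs_sub_birkhoff_le
      (a := fun w => infBirkhoff φ w - b w.length + infBirkhoff ψ w)
      (hψ.add hφ) hneg herr (fun w x hx => ?_) hz (by simpa using huup)
    rw [birkhoff_add, abs_le]
    have hφx := abs_le.1 (abs_infBirkhoff_sub_le hφ hx)
    have hψx := abs_le.1 (abs_infBirkhoff_sub_le hψ hx)
    constructor <;> linarith [neg_abs_le (b w.length), le_abs_self (b w.length)]
  · refine tendsto_of_abs_sub_birkhoff_le
      (a := fun w => supBirkhoff φ w + b w.length + supBirkhoff ψ w)
      (hψ.add hφ) hneg herr (fun w x hx => ?_) hz (by simpa using hulow)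
    rw [birkhoff_add, abs_le]
    have hφx := abs_le.1 (abs_supBirkhoff_sub_le hφ hx)
    have hψx := abs_le.1 (abs_supBirkhoff_sub_le hψ hx)
    constructor <;> linarith [neg_abs_le (b w.length), le_abs_self (b w.length)]

/-- **Lemma 5.6.**  For `m` large enough let `u̲_m, ū_m > 0` be the unique solutions of
`Σ_{ω∈Iᵐ} e^{u̲_m(S_ωφ + b_m + S_ωψ)} = 1` and `Σ_{ω∈Iᵐ} e^{ū_m(s_ωφ − b_m + s_ωψ)} = 1`.
Then `lim_m ū_m = lim_m u̲_m = z_ρ`, the unique zero of the pressure function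
`t ↦ P(t(ψ+φ))`. -/
theorem solutions_tend_to_pressure_zero
    {N : ℕ} (Φ : C1IFS N) (hΦ : Φ.NontrivialIFS)
    (π : SeqSp N → ℝ) (hπ : IsCoding Φ π) (hπc : Continuous π)
    (ψ : SeqSp N → ℝ) (hψc : Continuous ψ) (hψn : Normalized ψ)
    (b : ℕ → ℝ) (hb : IsWBDPseq Φ b)
    (φ : SeqSp N → ℝ) (hφ : φ = geomPot Φ π)
    (ulow uup : ℕ → ℝ)
    (hulow : ∀ᶠ m : ℕ in Filter.atTop, 0 < ulow m ∧
      (∑ v : Fin m → Fin N, Real.exp (ulow m *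
        (supBirkhoff φ (List.ofFn v) + b m + supBirkhoff ψ (List.ofFn v)))) = 1)
    (huup : ∀ᶠ m : ℕ in Filter.atTop, 0 < uup m ∧
      (∑ v : Fin m → Fin N, Real.exp (uup m *
        (infBirkhoff φ (List.ofFn v) - b m + infBirkhoff ψ (List.ofFn v)))) = 1)
    (z : ℝ)
    (hz : Filter.Tendsto
      (fun m => Real.log (partSum (fun x => z * (ψ x + φ x)) m) / m)
      Filter.atTop (nhds 0)) :
    Filter.Tendsto uup Filter.atTop (nhds z) ∧
    Filter.Tendsto ulow Filter.atTop (nhds z) := by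
  subst hφ
  exact solutions_tend_to_pressure_zero_general (continuous_geomPot hπ hπc) hψc
    (fun x => add_neg_of_nonpos_of_neg (hψn.nonpos x) (geomPot_neg hπ x)) hb.2.1
    (hulow.mono fun _ h => h.2) (huup.mono fun _ h => h.2) hz
end
end
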